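/- (Rokhlin lemma for Borel automorphisms.) Let m ≥ 1 be an integer and let T be an aperiodic Borel automorphism of (X,𝓑). Then for every ε > 0 and any finitely many Borel probability measures μ₁,…,μ_p on X there exists a Borel subset F ⊆ X such that the sets F, TF, …, T^{m−1}F are pairwise disjoint and μᵢ(F ∪ TF ∪ ⋯ ∪ T^{m−1}F) > 1 − ε for every i = 1,…,p. -/

import Mathlib

/-!
Given `N`, a greedy construction along a countable cover by `N`-separated Borel sets gives a
Borel marker set whose gaps along every orbit have length between `N` and `2 N`
(`exists_marker`). It yields Borel coordinates on each gap: the distance `p` to the previous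
marker and the distance `q` to the next one (`exists_coords`).

Take `N = M * m`. For `s < M`, cut every gap into blocks of length `m`, the first `s` blocks placed
from the start of the gap and the remaining ones placed backwards from its end. The starting points
of the blocks form the base of a tower of height `m` (`base_not_mem`), and the points left over
satisfy `s * m ≤ p < (s + 1) * m` (`mem_tower`). These remainders are disjoint for different `s`,
so for the finite measure `∑ i, μ i`, of total mass `k`, one of them has mass at most `k / M`, which
is less than `ε` once `M` is large. No invariance of the measures is needed, since the choice
of `s` replaces it.
-/

open MeasureTheory Set Filter Topology
open scoped ENNReal

namespace BDK

variable {X : Type*} [MeasurableSpace X]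

/-- The set `E(S,T)` where `S` and `T` (or their inverses) disagree. -/
def Edis (S T : X ≃ᵐ X) : Set X :=
  {x | S x ≠ T x} ∪ {x | S.symm x ≠ T.symm x}

/-- A finite family of Borel probability measures. -/
def IsProbFamily (M : Set (Measure X)) : Prop :=
  M.Finite ∧ ∀ μ ∈ M, IsProbabilityMeasure μ

/-- A finite family of non-atomic (continuous) Borel probability measures. -/
def IsContProbFamily (M : Set (Measure X)) : Prop :=
  M.Finite ∧ ∀ μ ∈ M, IsProbabilityMeasure μ ∧ ∀ x : X, μ {x} = 0

/-- A finite family of Borel sets. -/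
def IsBorelFamily (F : Set (Set X)) : Prop :=
  F.Finite ∧ ∀ A ∈ F, MeasurableSet A

/-- A finite family of uncountable Borel sets. -/
def IsUncountableBorelFamily (F : Set (Set X)) : Prop :=
  F.Finite ∧ ∀ A ∈ F, MeasurableSet A ∧ ¬ A.Countable

/-- Basic `τ`-neighborhood `U(T; μ₁,…,μₙ; ε)`. -/
def tauBall (T : X ≃ᵐ X) (M : Set (Measure X)) (ε : ℝ≥0∞) : Set (X ≃ᵐ X) :=
  {S | ∀ μ ∈ M, μ (Edis S T) < ε}

/-- The uniform topology `τ`. -/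
def tau : TopologicalSpace (X ≃ᵐ X) :=
  .generateFrom {O | ∃ (T : X ≃ᵐ X) (M : Set (Measure X)) (ε : ℝ≥0∞),
    IsProbFamily M ∧ 0 < ε ∧ O = tauBall T M ε}

/-- The topology `τ₀`: like `τ` but with non-atomic measures only. -/
def tau0 : TopologicalSpace (X ≃ᵐ X) :=
  .generateFrom {O | ∃ (T : X ≃ᵐ X) (M : Set (Measure X)) (ε : ℝ≥0∞),
    IsContProbFamily M ∧ 0 < ε ∧ O = tauBall T M ε}

/-- Basic `τ'`-neighborhood `U'(T; μ₁,…,μₙ; ε)`. -/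
def tau'Ball (T : X ≃ᵐ X) (M : Set (Measure X)) (ε : ℝ≥0∞) : Set (X ≃ᵐ X) :=
  {S | ∀ μ ∈ M,
    (⨆ F ∈ {F : Set X | MeasurableSet F}, μ (symmDiff (T '' F) (S '' F))) < ε}

/-- The topology `τ'`. -/
def tau' : TopologicalSpace (X ≃ᵐ X) :=
  .generateFrom {O | ∃ (T : X ≃ᵐ X) (M : Set (Measure X)) (ε : ℝ≥0∞),
    IsProbFamily M ∧ 0 < ε ∧ O = tau'Ball T M ε}

/-- The unit ball of bounded Borel functions. -/
def BorelUnitBall : Set (X → ℝ) := {f | Measurable f ∧ ∀ x, |f x| ≤ 1}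

/-- Basic `τ''`-neighborhood `U''(T; μ₁,…,μₙ; ε)`. -/
def tau''Ball (T : X ≃ᵐ X) (M : Set (Measure X)) (ε : ℝ) : Set (X ≃ᵐ X) :=
  {S | ∀ μ ∈ M,
    (⨆ f ∈ (BorelUnitBall : Set (X → ℝ)),
      |(∫ x, f x ∂(Measure.map (⇑S) μ)) - ∫ x, f x ∂(Measure.map (⇑T) μ)|) < ε}

/-- The topology `τ''`. -/
def tau'' : TopologicalSpace (X ≃ᵐ X) :=
  .generateFrom {O | ∃ (T : X ≃ᵐ X) (M : Set (Measure X)) (ε : ℝ),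
    IsProbFamily M ∧ 0 < ε ∧ O = tau''Ball T M ε}

/-- A finite Borel partition of `X`. -/
def IsBorelPartition (P : Finset (Set X)) : Prop :=
  (∀ A ∈ P, MeasurableSet A) ∧ (P : Set (Set X)).PairwiseDisjoint id ∧
    ⋃₀ (P : Set (Set X)) = univ

/-- Basic `τ̃`-neighborhood `Ṽ(T; μ₁,…,μₙ; ε)`. -/
def tauTildeBall (T : X ≃ᵐ X) (M : Set (Measure X)) (ε : ℝ) : Set (X ≃ᵐ X) :=
  {S | ∀ μ ∈ M,
    (⨆ P ∈ {P : Finset (Set X) | IsBorelPartition P},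
      ∑ A ∈ P, |(μ (T '' A)).toReal - (μ (S '' A)).toReal|) < ε}

/-- The topology `τ̃`. -/
def tauTilde : TopologicalSpace (X ≃ᵐ X) :=
  .generateFrom {O | ∃ (T : X ≃ᵐ X) (M : Set (Measure X)) (ε : ℝ),
    IsProbFamily M ∧ 0 < ε ∧ O = tauTildeBall T M ε}

/-- Basic `τ̄`-neighborhood `V̄(T; μ₁,…,μₙ; ε)`. -/
def tauBarBall (T : X ≃ᵐ X) (M : Set (Measure X)) (ε : ℝ) : Set (X ≃ᵐ X) :=
  {S | ∀ μ ∈ M,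
    (⨆ F ∈ {F : Set X | MeasurableSet F},
      |(μ (T '' F)).toReal - (μ (S '' F)).toReal|) < ε}

/-- The topology `τ̄`. -/
def tauBar : TopologicalSpace (X ≃ᵐ X) :=
  .generateFrom {O | ∃ (T : X ≃ᵐ X) (M : Set (Measure X)) (ε : ℝ),
    IsProbFamily M ∧ 0 < ε ∧ O = tauBarBall T M ε}

/-- Basic `p`-neighborhood `W(T; F₁,…,Fₖ)`. -/
def pBall (T : X ≃ᵐ X) (F : Set (Set X)) : Set (X ≃ᵐ X) :=
  {S | ∀ A ∈ F, S '' A = T '' A}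

/-- The weak topology `p`. -/
def pTop : TopologicalSpace (X ≃ᵐ X) :=
  .generateFrom {O | ∃ (T : X ≃ᵐ X) (F : Set (Set X)), IsBorelFamily F ∧ O = pBall T F}

/-- The topology `p₀`: like `p` but with uncountable Borel sets only. -/
def p0Top : TopologicalSpace (X ≃ᵐ X) :=
  .generateFrom {O | ∃ (T : X ≃ᵐ X) (F : Set (Set X)),
    IsUncountableBorelFamily F ∧ O = pBall T F}

/-- A finite family of bounded Borel functions. -/
def IsBddBorelFamily (G : Set (X → ℝ)) : Prop :=
  G.Finite ∧ ∀ f ∈ G, Measurable f ∧ ∃ C, ∀ x, |f x| ≤ C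

/-- Basic `p̃`-neighborhood `W̃(T; f₁,…,fₘ; ε)`. -/
def pTildeBall (T : X ≃ᵐ X) (G : Set (X → ℝ)) (ε : ℝ) : Set (X ≃ᵐ X) :=
  {S | ∀ f ∈ G, (⨆ x, |f (T.symm x) - f (S.symm x)|) < ε}

/-- The topology `p̃`. -/
def pTilde : TopologicalSpace (X ≃ᵐ X) :=
  .generateFrom {O | ∃ (T : X ≃ᵐ X) (G : Set (X → ℝ)) (ε : ℝ),
    IsBddBorelFamily G ∧ 0 < ε ∧ O = pTildeBall T G ε}

/-- Basic `p̄`-neighborhood `W̄(T; F₁,…,Fₖ; μ₁,…,μₙ; ε)`. -/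
def pBarBall (T : X ≃ᵐ X) (F : Set (Set X)) (M : Set (Measure X)) (ε : ℝ≥0∞) :
    Set (X ≃ᵐ X) :=
  {S | ∀ A ∈ F, ∀ μ ∈ M,
    μ (symmDiff (S '' A) (T '' A)) + μ (symmDiff (S.symm '' A) (T.symm '' A)) < ε}

/-- The topology `p̄`. -/
def pBar : TopologicalSpace (X ≃ᵐ X) :=
  .generateFrom {O | ∃ (T : X ≃ᵐ X) (F : Set (Set X)) (M : Set (Measure X)) (ε : ℝ≥0∞),
    IsBorelFamily F ∧ IsProbFamily M ∧ 0 < ε ∧ O = pBarBall T F M ε}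

/-- `T` has period exactly `n` at `x`. -/
def PerExactAt (T : X ≃ᵐ X) (n : ℕ) (x : X) : Prop :=
  (⇑T)^[n] x = x ∧ ∀ i, 0 < i → i < n → (⇑T)^[i] x ≠ x

/-- `Per_n(x)`: automorphisms with period exactly `n` at `x`. -/
def PerNAt (n : ℕ) (x : X) : Set (X ≃ᵐ X) := {T | PerExactAt T n x}

/-- `Per_n`: automorphisms of period exactly `n` at every point. -/
def PerN (n : ℕ) : Set (X ≃ᵐ X) := {T | ∀ x, PerExactAt T n x}

/-- `Per`: pointwise periodic automorphisms. -/
def PerSet : Set (X ≃ᵐ X) := {T | ∀ x, ∃ m, 0 < m ∧ (⇑T)^[m] x = x}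

/-- `Per₀`: automorphisms with `T^N = id` for some `N ≥ 1`. -/
def Per0Set : Set (X ≃ᵐ X) := {T | ∃ N, 0 < N ∧ ∀ x, (⇑T)^[N] x = x}

/-- `Ap`: aperiodic automorphisms. -/
def ApSet : Set (X ≃ᵐ X) := {T | ∀ x, ∀ n, 0 < n → (⇑T)^[n] x ≠ x}

/-- Automorphisms whose set of periodic points is at most countable. -/
def ApModCtbl : Set (X ≃ᵐ X) :=
  {T | {x | ∃ n, 0 < n ∧ (⇑T)^[n] x = x}.Countable}

/-- `Ctbl(X)`: automorphisms with at most countable support. -/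
def Ctbl : Set (X ≃ᵐ X) := {T | {x | T x ≠ x}.Countable}

/-- The full group `[T]`. -/
def fullGroup (T : X ≃ᵐ X) : Set (X ≃ᵐ X) :=
  {γ | ∀ x, ∃ m : ℤ, γ x = (T.toEquiv ^ m) x}

/-- Incompressible aperiodic automorphisms: aperiodic with an invariant Borel
probability measure. -/
def IncSet : Set (X ≃ᵐ X) :=
  {T | T ∈ ApSet ∧ ∃ μ : Measure X, IsProbabilityMeasure μ ∧
    ∀ A : Set X, MeasurableSet A → μ (⇑T ⁻¹' A) = μ A}

/-! ### Borel marker sets -/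

/-- Consecutive points of `C` on an orbit are at least `N` steps apart: no point of `C` returns to
`C` in fewer than `N` steps. -/
def Separated (T : X ≃ᵐ X) (N : ℕ) (C : Set X) : Prop :=
  ∀ x ∈ C, ∀ j, 0 < j → j < N → (⇑T)^[j] x ∉ C

/-- The points at orbit distance less than `N` from `C`. -/
def nbhd (T : X ≃ᵐ X) (N : ℕ) (C : Set X) : Set X :=
  {x | ∃ j < N, (⇑T)^[j] x ∈ C ∨ (⇑T.symm)^[j] x ∈ C}

/-- The greedy construction of a separated set: run through the sets `U n` and add at each step
the points of `U n` that are far from everything chosen before. -/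
def greedy (T : X ≃ᵐ X) (N : ℕ) (U : ℕ → Set X) : ℕ → Set X
  | 0 => ∅
  | n + 1 => greedy T N U n ∪ (U n \ nbhd T N (greedy T N U n))

theorem measurableSet_nbhd (T : X ≃ᵐ X) (N : ℕ) {C : Set X} (hC : MeasurableSet C) :
    MeasurableSet (nbhd T N C) := by
  have : nbhd T N C = ⋃ j, ⋃ (_ : j < N), ((⇑T)^[j] ⁻¹' C ∪ (⇑T.symm)^[j] ⁻¹' C) := by
    ext x; simp [nbhd]
  rw [this]
  exact MeasurableSet.iUnion fun j => MeasurableSet.iUnion fun _ =>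
    ((T.measurable.iterate j) hC).union ((T.symm.measurable.iterate j) hC)

theorem symm_iter_iter (T : X ≃ᵐ X) (j : ℕ) (x : X) : (⇑T.symm)^[j] ((⇑T)^[j] x) = x :=
  (Function.LeftInverse.iterate (fun y => T.symm_apply_apply y) j) x

theorem iter_symm_iter (T : X ≃ᵐ X) (j : ℕ) (x : X) : (⇑T)^[j] ((⇑T.symm)^[j] x) = x :=
  (Function.LeftInverse.iterate (fun y => T.apply_symm_apply y) j) x

theorem measurableSet_greedy (T : X ≃ᵐ X) (N : ℕ) {U : ℕ → Set X}
    (hU : ∀ n, MeasurableSet (U n)) (n : ℕ) : MeasurableSet (greedy T N U n) := by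
  induction n with
  | zero => exact MeasurableSet.empty
  | succ n ih => exact ih.union ((hU n).diff (measurableSet_nbhd T N ih))

theorem separated_greedy (T : X ≃ᵐ X) (N : ℕ) {U : ℕ → Set X}
    (hU : ∀ n, Separated T N (U n)) (n : ℕ) : Separated T N (greedy T N U n) := by
  induction n with
  | zero => intro x hx; exact absurd hx (by simp [greedy])
  | succ n ih =>
    rintro x (hx | hx) j hj hjN (hy | hy)
    · exact ih x hx j hj hjN hy
    · exact hy.2 ⟨j, hjN, Or.inr (by rwa [symm_iter_iter])⟩
    · exact hx.2 ⟨j, hjN, Or.inl hy⟩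
    · exact hU n x hx.1 j hj hjN hy.1

theorem greedy_mono (T : X ≃ᵐ X) (N : ℕ) (U : ℕ → Set X) : Monotone (greedy T N U) :=
  monotone_nat_of_le_succ fun _ => subset_union_left

/-- In a compatible Polish topology, a basic open set separates `x` from the finitely many points
`T x, …, T ^ (N - 1) x`, which differ from `x` by aperiodicity; hence countably many
`N`-separated Borel sets cover the space. -/
theorem exists_cover [StandardBorelSpace X] [Nonempty X] (T : X ≃ᵐ X) (hT : T ∈ ApSet) (N : ℕ) :
    ∃ U : ℕ → Set X, (∀ n, MeasurableSet (U n)) ∧ (∀ n, Separated T N (U n)) ∧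
      ∀ x, ∃ n, x ∈ U n := by
  let := upgradeStandardBorel X
  obtain ⟨b, hb⟩ := (TopologicalSpace.countable_countableBasis X).exists_eq_range
    (((TopologicalSpace.isBasis_countableBasis X).exists_nonempty_subset univ_nonempty
      isOpen_univ).imp fun _ h => h.1)
  have hbas := TopologicalSpace.isBasis_countableBasis X
  have hbm : ∀ n, MeasurableSet (b n) := fun n =>
    (hbas.isOpen (by rw [hb]; exact mem_range_self n)).measurableSet
  refine ⟨fun n => b n ∩ ⋂ j, ⋂ (_ : 0 < j ∧ j < N), ((⇑T)^[j] ⁻¹' b n)ᶜ, ?_, ?_, ?_⟩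
  · exact fun n => (hbm n).inter (MeasurableSet.iInter fun j => MeasurableSet.iInter fun _ =>
      ((T.measurable.iterate j) (hbm n)).compl)
  · intro n x hx j hj hjN hy
    have := mem_iInter₂.1 hx.2 j ⟨hj, hjN⟩
    exact this hy.1
  · intro x
    have hfin : ((fun j => (⇑T)^[j] x) '' {j | 0 < j ∧ j < N}).Finite :=
      ((Set.finite_lt_nat N).subset fun j hj => hj.2).image _
    obtain ⟨V, hV, hxV, hVs⟩ := hbas.exists_subset_of_mem_open
      (a := x) (u := ((fun j => (⇑T)^[j] x) '' {j | 0 < j ∧ j < N})ᶜ)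
      (by rintro ⟨j, hj, hjx⟩; exact hT x j hj.1 hjx) hfin.isClosed.isOpen_compl
    rw [hb] at hV
    obtain ⟨n, rfl⟩ := hV
    refine ⟨n, hxV, mem_iInter₂.2 fun j hj hy => hVs hy ⟨j, hj, rfl⟩⟩

/-- A Borel maximal `N`-separated set: it hits every orbit, with all gaps between `N` and
`2 N`. -/
theorem exists_marker [StandardBorelSpace X] [Nonempty X] (T : X ≃ᵐ X) (hT : T ∈ ApSet) (N : ℕ)
    (hN : 0 < N) :
    ∃ B : Set X, MeasurableSet B ∧ Separated T N B ∧ ∀ x, x ∈ nbhd T N B := by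
  obtain ⟨U, hUm, hUs, hU⟩ := exists_cover T hT N
  refine ⟨⋃ n, greedy T N U n, MeasurableSet.iUnion (measurableSet_greedy T N hUm), ?_, ?_⟩
  · intro x hx j hj hjN hy
    obtain ⟨n, hn⟩ := mem_iUnion.1 hx
    obtain ⟨l, hl⟩ := mem_iUnion.1 hy
    exact separated_greedy T N hUs (max n l) x (greedy_mono T N U (le_max_left _ _) hn) j hj hjN
      (greedy_mono T N U (le_max_right _ _) hl)
  · intro x
    obtain ⟨n, hn⟩ := hU x
    by_cases h : x ∈ nbhd T N (greedy T N U n)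
    · obtain ⟨j, hj, h⟩ := h
      exact ⟨j, hj, h.imp (fun h => mem_iUnion.2 ⟨n, h⟩) fun h => mem_iUnion.2 ⟨n, h⟩⟩
    · exact ⟨0, hN, Or.inl (mem_iUnion.2 ⟨n + 1, Or.inr ⟨hn, h⟩⟩)⟩

/-! ### Coordinates along the gaps -/

/-- Borel coordinates along the orbits: `p` is the number of steps since the last visit to the
marker set and `q ≥ 1` is the number of steps to the next one. They change by one along each gap,
and `p + q`, the length of the gap, is at least `N`. -/
theorem exists_coords [StandardBorelSpace X] [Nonempty X] (T : X ≃ᵐ X) (hT : T ∈ ApSet) (N : ℕ)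
    (hN : 0 < N) :
    ∃ p q : X → ℕ, Measurable p ∧ Measurable q ∧ (∀ x, 0 < q x) ∧
      (∀ x, 1 < q x → p (T x) = p x + 1 ∧ q (T x) + 1 = q x) ∧
      (∀ x, 0 < p x → p (T.symm x) + 1 = p x ∧ q (T.symm x) = q x + 1) ∧
      ∀ x, N ≤ p x + q x := by
  classical
  obtain ⟨B, hBm, hBs, hB⟩ := exists_marker T hT N hN
  have hp : ∀ x, ∃ j, (⇑T.symm)^[j] x ∈ B := by
    intro x
    obtain ⟨j, hj, h | h⟩ := hB ((⇑T.symm)^[N] x)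
    · refine ⟨N - j, ?_⟩
      rwa [show N = j + (N - j) by omega, Function.iterate_add_apply, iter_symm_iter] at h
    · exact ⟨j + N, by rwa [Function.iterate_add_apply]⟩
  have hq : ∀ x, ∃ j, (⇑T)^[j + 1] x ∈ B := by
    intro x
    obtain ⟨j, hj, h | h⟩ := hB ((⇑T)^[N] x)
    · refine ⟨j + N - 1, ?_⟩
      rwa [show j + N - 1 + 1 = j + N by omega, Function.iterate_add_apply]
    · refine ⟨N - j - 1, ?_⟩
      rw [show N - j - 1 + 1 = N - j by omega]
      rwa [show N = j + (N - j) by omega, Function.iterate_add_apply, symm_iter_iter] at h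
  have hpm : Measurable fun x => Nat.find (hp x) :=
    measurable_find hp fun j => (T.symm.measurable.iterate j) hBm
  have hqm : Measurable fun x => Nat.find (hq x) :=
    measurable_find hq fun j => (T.measurable.iterate (j + 1)) hBm
  have key : ∀ x, T x ∉ B → Nat.find (hp (T x)) = Nat.find (hp x) + 1 ∧
      Nat.find (hq x) = Nat.find (hq (T x)) + 1 := by
    intro x hx
    constructor
    · rw [Nat.find_comp_succ (hp (T x)) (by simpa using hp x) (by simpa using hx)]
      simp
    · rw [Nat.find_comp_succ (hq x) (by simpa using hq (T x)) (by simpa using hx)]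
      simp
  refine ⟨fun x => Nat.find (hp x), fun x => Nat.find (hq x) + 1, hpm,
    (measurable_of_countable (· + 1)).comp hqm, fun x => Nat.succ_pos _, ?_, ?_, ?_⟩
  · intro x hx
    dsimp only at hx
    have h : T x ∉ B := fun h => by
      have : Nat.find (hq x) = 0 := (Nat.find_eq_zero _).2 (by simpa using h)
      omega
    have := key x h
    dsimp only
    omega
  · intro x hx
    dsimp only at hx
    have h : T (T.symm x) ∉ B := fun h => by
      rw [T.apply_symm_apply] at h
      have : Nat.find (hp x) = 0 := (Nat.find_eq_zero _).2 (by simpa using h)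
      omega
    have := key (T.symm x) h
    simp only [T.apply_symm_apply] at this
    dsimp only
    omega
  · intro x
    by_contra! hlt
    refine hBs _ (Nat.find_spec (hp x)) (Nat.find (hp x) + (Nat.find (hq x) + 1)) (by omega) hlt ?_
    rw [add_comm, Function.iterate_add_apply, iter_symm_iter]
    exact Nat.find_spec (hq x)

/-! ### Towers from block decompositions of the gaps -/

section Tower

variable {T : X ≃ᵐ X} {p q : X → ℕ}

theorem coords_iterate
    (h : ∀ x, 1 < q x → p (T x) = p x + 1 ∧ q (T x) + 1 = q x) (i : ℕ) :
    ∀ x, i < q x → p ((⇑T)^[i] x) = p x + i ∧ q ((⇑T)^[i] x) + i = q x := by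
  induction i with
  | zero => simp
  | succ i ih =>
    intro x hx
    have h1 := h x (by omega)
    have h2 := ih (T x) (by omega)
    rw [Function.iterate_succ_apply]
    omega

theorem coords_symm_iterate
    (h : ∀ x, 0 < p x → p (T.symm x) + 1 = p x ∧ q (T.symm x) = q x + 1) (i : ℕ) :
    ∀ x, i ≤ p x → p ((⇑T.symm)^[i] x) + i = p x ∧ q ((⇑T.symm)^[i] x) = q x + i := by
  induction i with
  | zero => simp
  | succ i ih =>
    intro x hx
    have h1 := h x (by omega)
    have h2 := ih (T.symm x) (by omega)
    rw [Function.iterate_succ_apply]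
    omega

/-- The base of a tower of height `m`, consisting of the starting points of blocks: each gap is cut
into blocks of length `m`, the first `s` of them counted from the start of the gap and all others counted backwards from its end. -/
def base (p q : X → ℕ) (m s : ℕ) : Set X :=
  {x | (p x < s * m ∧ m ∣ p x) ∨ (s * m ≤ p x ∧ m ∣ q x)}

theorem measurableSet_base (hp : Measurable p) (hq : Measurable q) (m s : ℕ) :
    MeasurableSet (base p q m s) :=
  (hp.prodMk hq) (t := {a : ℕ × ℕ | (a.1 < s * m ∧ m ∣ a.1) ∨ (s * m ≤ a.1 ∧ m ∣ a.2)})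
    (MeasurableSet.of_discrete)

/-- Distinct levels of the tower are disjoint, since each block stays inside its gap and blocks do
not overlap. -/
theorem base_not_mem {m s : ℕ} (hq : ∀ x, 0 < q x)
    (h : ∀ x, 1 < q x → p (T x) = p x + 1 ∧ q (T x) + 1 = q x)
    (hN : ∀ x, s * m ≤ p x + q x) (d : ℕ) (hd : 0 < d) (hdm : d < m) (x : X)
    (hx : x ∈ base p q m s) : (⇑T)^[d] x ∉ base p q m s := by
  have hq0 := hq x
  have hNx := hN x
  rcases hx with ⟨hlt, a, ha⟩ | ⟨hle, b, hb⟩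
  · -- The whole block lies below level `s * m`, hence inside the gap.
    have has : a + 1 ≤ s := by
      by_contra! hc
      have : s * m ≤ a * m := Nat.mul_le_mul_right m (by omega)
      rw [mul_comm a m] at this
      omega
    have h3 : (a + 1) * m ≤ s * m := Nat.mul_le_mul_right m has
    have h4 : (a + 1) * m = m * a + m := by ring
    obtain ⟨h1, -⟩ := coords_iterate h d x (by omega)
    rintro (⟨-, hdvd⟩ | ⟨hge, -⟩)
    · rw [h1, ha] at hdvd
      exact Nat.not_dvd_of_pos_of_lt hd hdm ((Nat.dvd_add_right (dvd_mul_right m a)).1 hdvd)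
    · omega
  · have hmq : m ≤ q x := Nat.le_of_dvd hq0 ⟨b, hb⟩
    obtain ⟨h1, h2⟩ := coords_iterate h d x (by omega)
    rintro (⟨hlt, -⟩ | ⟨-, hdvd⟩)
    · omega
    · exact Nat.not_dvd_of_pos_of_lt hd hdm
        ((Nat.dvd_add_right hdvd).1 (h2 ▸ ⟨b, hb⟩))

/-- The levels of the tower over `base p q m s` only miss points whose `p`-coordinate lies in
`[s * m, (s + 1) * m)`. -/
theorem mem_tower {m s : ℕ} (hm : 1 ≤ m)
    (h : ∀ x, 0 < p x → p (T.symm x) + 1 = p x ∧ q (T.symm x) = q x + 1) (x : X)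
    (hx : p x / m ≠ s) : x ∈ ⋃ j ∈ Finset.range m, (⇑T)^[j] '' base p q m s := by
  suffices ∃ r < m, (⇑T.symm)^[r] x ∈ base p q m s by
    obtain ⟨r, hr, hmem⟩ := this
    exact mem_iUnion₂.2 ⟨r, Finset.mem_range.2 hr, _, hmem, iter_symm_iter T r x⟩
  rcases lt_or_gt_of_ne hx with hlt | hgt
  · have hps : p x < s * m := (Nat.div_lt_iff_lt_mul hm).1 hlt
    obtain ⟨h1, -⟩ := coords_symm_iterate h (p x % m) x (Nat.mod_le _ _)
    refine ⟨p x % m, Nat.mod_lt _ hm, Or.inl ⟨by omega, p x / m, ?_⟩⟩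
    have := Nat.mod_add_div (p x) m
    omega
  · have hps : (s + 1) * m ≤ p x := (Nat.le_div_iff_mul_le hm).1 hgt
    rw [add_mul, one_mul] at hps
    -- The least `r` with `m ∣ q x + r`.
    obtain ⟨r, hr, hdvd⟩ : ∃ r < m, m ∣ q x + r := by
      have hmod := Nat.mod_lt (q x) hm
      have hdiv := Nat.mod_add_div (q x) m
      rcases Nat.eq_zero_or_pos (q x % m) with h0 | h0
      · exact ⟨0, hm, q x / m, by omega⟩
      · exact ⟨m - q x % m, by omega, q x / m + 1, by rw [mul_add, mul_one]; omega⟩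
    obtain ⟨h1, h2⟩ := coords_symm_iterate h r x (by omega)
    exact ⟨r, hr, Or.inr ⟨by omega, h2 ▸ hdvd⟩⟩

end Tower

/-! ### The Rokhlin lemma -/

/-- Rokhlin lemma for aperiodic Borel automorphisms: for every `m ≥ 1`, every `ε > 0` and
finitely many Borel probability measures `μ₁,…,μ_k`, there exists a Borel set `F` such
that `F, TF, …, T^{m−1}F` are pairwise disjoint and
`μᵢ(F ∪ TF ∪ ⋯ ∪ T^{m−1}F) > 1 − ε` for every `i`. -/
theorem rokhlin_lemma {X : Type*} [MeasurableSpace X] [StandardBorelSpace X] [Uncountable X]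
    (m : ℕ) (hm : 1 ≤ m) (T : X ≃ᵐ X) (hT : T ∈ ApSet)
    (ε : ℝ≥0∞) (hε : 0 < ε) (k : ℕ) (μ : Fin k → Measure X)
    (hμ : ∀ i, IsProbabilityMeasure (μ i)) :
    ∃ F : Set X, MeasurableSet F ∧
      (∀ i j, i < m → j < m → i ≠ j → Disjoint ((⇑T)^[i] '' F) ((⇑T)^[j] '' F)) ∧
      ∀ i, 1 - ε < μ i (⋃ j ∈ Finset.range m, (⇑T)^[j] '' F) := by
  obtain ⟨e, he0, heε, he1⟩ : ∃ e : ℝ≥0∞, e ≠ 0 ∧ e ≤ ε ∧ e ≤ 1 :=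
    ⟨min ε 1, (lt_min hε one_pos).ne', min_le_left _ _, min_le_right _ _⟩
  obtain ⟨M, hM⟩ := ENNReal.exists_nat_mul_gt he0 (ENNReal.natCast_ne_top k)
  have hM0 : 0 < M := Nat.pos_of_ne_zero fun h => by simp [h] at hM
  obtain ⟨p, q, hpm, hqm, hq, hfw, hbw, hN⟩ :=
    exists_coords T hT (M * m) (Nat.mul_pos hM0 hm)
  have hdm : Measurable fun x => p x / m := (measurable_of_countable (· / m)).comp hpm
  -- Pigeonhole: the sets missed by different choices of `s` are disjoint.
  obtain ⟨s, hsM, hs⟩ : ∃ s < M, (∑ i, μ i) ((fun x => p x / m) ⁻¹' {s}) < e := by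
    by_contra! hc
    have h1 : ∑ _s ∈ Finset.range M, e ≤
        ∑ s ∈ Finset.range M, (∑ i, μ i) ((fun x => p x / m) ⁻¹' {s}) :=
      Finset.sum_le_sum fun s hs => hc s (Finset.mem_range.1 hs)
    rw [sum_measure_preimage_singleton _ fun s _ => hdm (measurableSet_singleton s)] at h1
    have h2 : (∑ i, μ i) ((fun x => p x / m) ⁻¹' ↑(Finset.range M)) ≤ k :=
      (measure_mono (subset_univ _)).trans (by simp)
    rw [Finset.sum_const, Finset.card_range, nsmul_eq_mul] at h1
    exact absurd (h1.trans h2) (not_le.2 hM)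
  have hsep := base_not_mem (T := T) (m := m) (s := s) hq hfw
    fun x => (Nat.mul_le_mul_right m hsM.le).trans (hN x)
  have hdisj : ∀ i j, i < j → j < m →
      Disjoint ((⇑T)^[i] '' base p q m s) ((⇑T)^[j] '' base p q m s) := by
    intro i j hij hj
    rw [Set.disjoint_left]
    rintro _ ⟨x, hx, rfl⟩ ⟨y, hy, hxy⟩
    rw [show j = i + (j - i) by omega, Function.iterate_add_apply] at hxy
    refine hsep (j - i) (by omega) (by omega) y hy ?_
    rwa [T.injective.iterate i hxy]
  refine ⟨base p q m s, measurableSet_base hpm hqm m s, ?_, ?_⟩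
  · intro i j hi hj hij
    rcases lt_or_gt_of_ne hij with h | h
    · exact hdisj i j h hj
    · exact (hdisj j i h hi).symm
  · intro i
    set G := ⋃ j ∈ Finset.range m, (⇑T)^[j] '' base p q m s
    have hGc : μ i Gᶜ < e := by
      refine lt_of_le_of_lt ((measure_mono (t := (fun x => p x / m) ⁻¹' {s}) ?_).trans ?_) hs
      · exact fun x hx => by_contra fun hne => hx (mem_tower hm hbw x hne)
      · rw [Measure.finsetSum_apply]
        exact Finset.single_le_sum (f := fun i => μ i ((fun x => p x / m) ⁻¹' {s}))
          (fun _ _ => zero_le) (Finset.mem_univ i)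
    by_contra! hle
    have h1 : (1 : ℝ≥0∞) ≤ μ i G + μ i Gᶜ := by
      have := measure_union_le (μ := μ i) G Gᶜ
      rwa [union_compl_self, measure_univ] at this
    have h2 : μ i G + μ i Gᶜ < (1 - e) + e :=
      ENNReal.add_lt_add_of_le_of_lt (measure_ne_top _ _) (hle.trans (tsub_le_tsub_left heε 1)) hGc
    rw [tsub_add_cancel_of_le he1] at h2
    exact absurd h1 (not_le.2 h2)

end BDK
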